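/- (Lemma 2.) Let p be a prime with p ≡ 19 (mod 24) and let ω(p) denote the smallest prime factor of (p² − 1)/24. Then for every (x,y,z) ∈ 𝔽_p³ with x² + y² + z² = xyz, (x,y,z) ≠ (0,0,0) and z² ≠ 1, and every integer n ≥ 1 with fⁿ(x,y,z) = (x,y,z), one has n ≥ ω(p). -/

import Mathlib

/-- The automorphism `f = φ₁ ∘ φ₂` of the Markoff surface,
`f(x,y,z) = ((z²−1)x − zy, zx − y, z)`. -/
def markoffMap {R : Type*} [CommRing R] (P : R × R × R) : R × R × R :=
  ((P.2.2 ^ 2 - 1) * P.1 - P.2.2 * P.2.1, P.2.2 * P.1 - P.2.1, P.2.2)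

/-!
On a plane of constant `z` the map is linear: it is the square of a map of determinant `1` and trace
`z`, so its eigenvalues are `t²` and `t⁻²` where `z = t + t⁻¹`. The linear form `x - t y` is an
eigenvector of the dual map, and on the surface the product of the two eigenforms is `-z²`; so if
`z ≠ 0`, a point of period `n` forces `(t²)ⁿ = 1`.

Over the field with `q` elements, `t^q` is `t` or `t⁻¹`, so the order `d` of `t²` divides
`(q - 1) / 2` or `(q + 1) / 2`. When `q ≡ 7 (mod 12)` these are `3 a` and `2 b`, where
`a b = (q² - 1) / 24`, so if `d` were coprime to `a b` it would divide `3` or `2`. Then `z² = 1`,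
`z = 0` or `z² = 4`, and the last two do not occur on the surface because `-1` is not a square.
-/

section Eigenform

variable {R : Type*} [CommRing R] {t x y z : R}

theorem markoffMap_semiconj {S : Type*} [CommRing S] (φ : R →+* S) :
    Function.Semiconj (Prod.map φ (Prod.map φ φ)) markoffMap markoffMap := fun P => by
  simp [markoffMap]

/-- The linear form `x - t y`. When `t² + 1 = z t`, it is an eigenform, of eigenvalue `t⁻²`, of the
linear map that `markoffMap` induces on the plane of points with third coordinate `z`. -/
def markoffEigenform (t : R) (P : R × R × R) : R :=
  P.1 - t * P.2.1

theorem sq_mul_markoffEigenform_markoffMap {P : R × R × R} (ht : t ^ 2 + 1 = P.2.2 * t) :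
    t ^ 2 * markoffEigenform t (markoffMap P) = markoffEigenform t P := by
  obtain ⟨x, y, z⟩ := P
  simp only [markoffEigenform, markoffMap] at ht ⊢
  linear_combination (t * y - (t * z + 1) * x) * ht

theorem sq_pow_mul_markoffEigenform_iterate (n : ℕ) {P : R × R × R}
    (ht : t ^ 2 + 1 = P.2.2 * t) :
    (t ^ 2) ^ n * markoffEigenform t (markoffMap^[n] P) = markoffEigenform t P := by
  induction n generalizing P with
  | zero => simp
  | succ n ih =>
    have ih' := ih (P := markoffMap P) ht
    rw [Function.iterate_succ_apply, pow_succ', mul_assoc, ih',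
      sq_mul_markoffEigenform_markoffMap ht]

theorem markoffEigenform_mul_conj (hM : x ^ 2 + y ^ 2 + z ^ 2 = x * y * z)
    (ht : t ^ 2 + 1 = z * t) :
    markoffEigenform t (x, y, z) * markoffEigenform (z - t) (x, y, z) = -z ^ 2 := by
  simp only [markoffEigenform]
  linear_combination hM - y ^ 2 * ht

theorem sq_pow_eq_one_of_isPeriodicPt_markoffMap [IsDomain R]
    (hM : x ^ 2 + y ^ 2 + z ^ 2 = x * y * z) (hz : z ≠ 0) (ht : t ^ 2 + 1 = z * t) {n : ℕ}
    (hper : Function.IsPeriodicPt markoffMap n (x, y, z)) :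
    (t ^ 2) ^ n = 1 := by
  have eigenform_ne_zero : markoffEigenform t (x, y, z) ≠ 0 := by
    refine left_ne_zero_of_mul (b := markoffEigenform (z - t) (x, y, z)) ?_
    rw [markoffEigenform_mul_conj hM ht]
    exact neg_ne_zero.mpr (pow_ne_zero 2 hz)
  have eigenform_fixed := sq_pow_mul_markoffEigenform_iterate n (P := (x, y, z)) ht
  rw [hper.eq] at eigenform_fixed
  exact (mul_eq_right₀ eigenform_ne_zero).mp eigenform_fixed

end Eigenform

section Eigenvalue

theorem exists_sq_add_one_eq_mul {K : Type*} [Field K] [IsAlgClosed K] (z : K) :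
    ∃ t : K, t ^ 2 + 1 = z * t := by
  open Polynomial in
  obtain ⟨t, ht⟩ := IsAlgClosed.exists_root (X ^ 2 - C z * X + 1) (by
    have : (X ^ 2 - C z * X + 1).degree = 2 := by compute_degree!
    simp [this])
  refine ⟨t, ?_⟩
  simp only [Polynomial.IsRoot.def, Polynomial.eval_add, Polynomial.eval_sub, Polynomial.eval_mul,
    Polynomial.eval_pow, Polynomial.eval_X, Polynomial.eval_C, Polynomial.eval_one] at ht
  linear_combination ht

variable {R : Type*} [CommRing R] {t z : R}

theorem trace_sq_eq_four_of_sq_eq_one (ht : t ^ 2 + 1 = z * t) (h : t ^ 2 = 1) : z ^ 2 = 4 := by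
  linear_combination (t ^ 2 + 3 - z ^ 2) * h - (t ^ 2 + 1 + z * t) * ht

theorem ne_zero_of_sq_add_one_eq_mul [Nontrivial R] (ht : t ^ 2 + 1 = z * t) : t ≠ 0 := by
  rintro rfl
  simp at ht

variable [IsDomain R]

theorem trace_eq_zero_of_orderOf_sq_dvd_two (ht : t ^ 2 + 1 = z * t) (hz : z ^ 2 ≠ 4)
    (h : orderOf (t ^ 2) ∣ 2) : z = 0 := by
  have ht0 := ne_zero_of_sq_add_one_eq_mul ht
  have ht1 : t ^ 2 - 1 ≠ 0 := sub_ne_zero.mpr (mt (trace_sq_eq_four_of_sq_eq_one ht) hz)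
  have factored : (t ^ 2 - 1) * t * z = 0 := by
    linear_combination orderOf_dvd_iff_pow_eq_one.mp h - (t ^ 2 - 1) * ht
  exact (mul_eq_zero.mp factored).resolve_left (mul_ne_zero ht1 ht0)

theorem trace_sq_eq_one_of_orderOf_sq_dvd_three (ht : t ^ 2 + 1 = z * t) (hz : z ^ 2 ≠ 4)
    (h : orderOf (t ^ 2) ∣ 3) : z ^ 2 = 1 := by
  have ht0 := ne_zero_of_sq_add_one_eq_mul ht
  have ht1 : t ^ 2 - 1 ≠ 0 := sub_ne_zero.mpr (mt (trace_sq_eq_four_of_sq_eq_one ht) hz)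
  have factored : (t ^ 2 - 1) * t ^ 2 * (z ^ 2 - 1) = 0 := by
    linear_combination
      orderOf_dvd_iff_pow_eq_one.mp h - (t ^ 2 - 1) * (t ^ 2 + 1 + z * t) * ht
  exact sub_eq_zero.mp
    ((mul_eq_zero.mp factored).resolve_left (mul_ne_zero ht1 (pow_ne_zero 2 ht0)))

end Eigenvalue

section NegOneNotSquare

variable {F : Type*} [Field F] {x y z : F}

theorem eq_zero_of_sq_add_sq_eq_zero (hF : ¬IsSquare (-1 : F)) (h : x ^ 2 + y ^ 2 = 0) :
    y = 0 := by
  by_contra hy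
  refine hF ⟨x / y, ?_⟩
  field_simp
  linear_combination -h

theorem two_ne_zero_of_not_isSquare_neg_one (hF : ¬IsSquare (-1 : F)) : (2 : F) ≠ 0 :=
  fun h => hF ⟨1, by linear_combination -h⟩

theorem third_coord_ne_zero_of_markoff (hF : ¬IsSquare (-1 : F))
    (hM : x ^ 2 + y ^ 2 + z ^ 2 = x * y * z) (hne : (x, y, z) ≠ (0, 0, 0)) : z ≠ 0 := by
  rintro rfl
  have hy : y = 0 := eq_zero_of_sq_add_sq_eq_zero (x := x) hF (by linear_combination hM)
  have hx : x = 0 := eq_zero_of_sq_add_sq_eq_zero (x := y) hF (by linear_combination hM)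
  exact hne (by rw [hx, hy])

theorem third_coord_sq_ne_four_of_markoff (hF : ¬IsSquare (-1 : F))
    (hM : x ^ 2 + y ^ 2 + z ^ 2 = x * y * z) : z ^ 2 ≠ 4 := by
  intro hz
  have sum_sq : (2 * x - z * y) ^ 2 + 4 ^ 2 = 0 := by
    linear_combination 4 * hM + (y ^ 2 - 4) * hz
  have four_eq_zero : (4 : F) = 0 := eq_zero_of_sq_add_sq_eq_zero hF sum_sq
  exact pow_ne_zero 2 (two_ne_zero_of_not_isSquare_neg_one hF) (by linear_combination four_eq_zero)

end NegOneNotSquare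

theorem sq_sub_one_div_twentyFour {q : ℕ} (hq : q % 12 = 7) :
    (q ^ 2 - 1) / 24 = (q - 1) / 6 * ((q + 1) / 4) := by
  obtain ⟨k, rfl⟩ : ∃ k, q = 12 * k + 7 := ⟨q / 12, by lia⟩
  have first_factor : (12 * k + 7 - 1) / 6 = 2 * k + 1 := by lia
  have second_factor : (12 * k + 7 + 1) / 4 = 3 * k + 2 := by lia
  have sq_sub_one : (12 * k + 7) ^ 2 - 1 = 24 * ((2 * k + 1) * (3 * k + 2)) :=
    Nat.sub_eq_of_eq_add (by ring)
  rw [first_factor, second_factor, sq_sub_one, Nat.mul_div_cancel_left _ (by norm_num)]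

section FiniteField

variable {F K : Type*} [Field F] [Fintype F] [Field K] [Algebra F K] {t : K} {z : F}

local notation "q" => Fintype.card F

theorem pow_card_eq_or_pow_card_mul_eq_one (ht : t ^ 2 + 1 = algebraMap F K z * t) :
    t ^ q = t ∨ t ^ q * t = 1 := by
  have frobenius_root : (t ^ q) ^ 2 + 1 = algebraMap F K z * t ^ q := by
    simpa only [map_add, map_mul, map_pow, map_one, AlgHom.commutes,
      FiniteField.frobeniusAlgHom_apply] using congrArg (FiniteField.frobeniusAlgHom F K) ht
  have factored : (t ^ q - t) * (t ^ q * t - 1) = 0 := by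
    linear_combination t * frobenius_root - t ^ q * ht
  exact (mul_eq_zero.mp factored).imp sub_eq_zero.mp sub_eq_zero.mp

theorem orderOf_sq_dvd_half_card_sub_one_or_add_one (hq : Odd q)
    (ht : t ^ 2 + 1 = algebraMap F K z * t) :
    orderOf (t ^ 2) ∣ (q - 1) / 2 ∨ orderOf (t ^ 2) ∣ (q + 1) / 2 := by
  have ht0 := ne_zero_of_sq_add_one_eq_mul ht
  obtain ⟨m, hm⟩ := hq
  simp only [orderOf_dvd_iff_pow_eq_one, ← pow_mul]
  refine (pow_card_eq_or_pow_card_mul_eq_one ht).imp (fun h => ?_) (fun h => ?_)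
  · rw [show 2 * ((q - 1) / 2) = 2 * m by lia]
    rw [hm, pow_succ] at h
    exact (mul_eq_right₀ ht0).mp h
  · rwa [show 2 * ((q + 1) / 2) = q + 1 by lia, pow_succ]

theorem not_coprime_orderOf_sq (hq : q % 12 = 7) (hz0 : z ≠ 0) (hz1 : z ^ 2 ≠ 1) (hz4 : z ^ 2 ≠ 4)
    (ht : t ^ 2 + 1 = algebraMap F K z * t) :
    ¬(orderOf (t ^ 2)).Coprime ((q ^ 2 - 1) / 24) := by
  rw [sq_sub_one_div_twentyFour hq]
  intro hcop
  have inj := (algebraMap F K).injective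
  have hz4' : algebraMap F K z ^ 2 ≠ 4 := fun h =>
    hz4 (inj (by rw [map_pow, h, map_ofNat]))
  rcases orderOf_sq_dvd_half_card_sub_one_or_add_one (Nat.odd_iff.mpr (by lia)) ht with h | h
  · rw [show (q - 1) / 2 = (q - 1) / 6 * 3 by lia] at h
    have order_dvd_three := hcop.coprime_mul_right_right.dvd_of_dvd_mul_left h
    have := trace_sq_eq_one_of_orderOf_sq_dvd_three ht hz4' order_dvd_three
    exact hz1 (inj (by simpa using this))
  · rw [show (q + 1) / 2 = (q + 1) / 4 * 2 by lia] at h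
    have order_dvd_two := hcop.coprime_mul_left_right.dvd_of_dvd_mul_left h
    have := trace_eq_zero_of_orderOf_sq_dvd_two ht hz4' order_dvd_two
    exact hz0 (inj (by simpa using this))

end FiniteField

theorem stmt_11_general {F : Type*} [Field F] [Fintype F] (hq : Fintype.card F % 12 = 7)
    {x y z : F} (hM : x ^ 2 + y ^ 2 + z ^ 2 = x * y * z) (hne : (x, y, z) ≠ (0, 0, 0))
    (hz : z ^ 2 ≠ 1) {n : ℕ} (hper : Function.IsPeriodicPt markoffMap n (x, y, z)) :
    ¬n.Coprime ((Fintype.card F ^ 2 - 1) / 24) := by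
  have hF : ¬IsSquare (-1 : F) := by
    rw [FiniteField.isSquare_neg_one_iff]
    lia
  have hz0 : z ≠ 0 := third_coord_ne_zero_of_markoff hF hM hne
  have hz4 : z ^ 2 ≠ 4 := third_coord_sq_ne_four_of_markoff hF hM
  let φ := algebraMap F (AlgebraicClosure F)
  obtain ⟨t, ht⟩ := exists_sq_add_one_eq_mul (φ z)
  have hMφ : φ x ^ 2 + φ y ^ 2 + φ z ^ 2 = φ x * φ y * φ z := by simpa using congrArg φ hM
  have hperφ : Function.IsPeriodicPt markoffMap n (φ x, φ y, φ z) :=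
    hper.map (markoffMap_semiconj φ)
  have htn : (t ^ 2) ^ n = 1 :=
    sq_pow_eq_one_of_isPeriodicPt_markoffMap hMφ ((map_ne_zero φ).mpr hz0) ht hperφ
  exact mt (Nat.Coprime.coprime_dvd_left (orderOf_dvd_of_pow_eq_one htn))
    (not_coprime_orderOf_sq hq hz0 hz hz4 ht)

theorem stmt_11 (p : ℕ) (hp : p.Prime) (hp24 : p % 24 = 19)
    (x y z : ZMod p)
    (hM : x ^ 2 + y ^ 2 + z ^ 2 = x * y * z)
    (hne : (x, y, z) ≠ (0, 0, 0))
    (hz : z ^ 2 ≠ 1)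
    (n : ℕ) (hn : 1 ≤ n)
    (hper : markoffMap^[n] (x, y, z) = (x, y, z)) :
    ((p ^ 2 - 1) / 24).minFac ≤ n := by
  have : Fact p.Prime := ⟨hp⟩
  have not_coprime := stmt_11_general (by rw [ZMod.card]; lia) hM hne hz hper
  rw [ZMod.card] at not_coprime
  exact not_lt.mp fun h => not_coprime (Nat.coprime_of_lt_minFac (by lia) h).symm
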